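/- For all nonzero integers n, m and all x, y ∈ SL(2,ℂ), writing s = tr x, t = tr y, u = tr(xy), one has tr(xⁿ·yᵐ·x⁻ⁿ·y⁻ᵐ) = 2 + φ_{|n|}(s)²·φ_{|m|}(t)²·(s² + t² + u² − s·t·u − 4). -/

import Mathlib

/-!
By Cayley–Hamilton, every integer power of `x ∈ SL(2, R)` is a combination `p • x - q • 1` of `x`
and the identity, where `p = S_{n-1}(tr x)` is a value of a Chebyshev polynomial, equal to
`± φ_{|n|}(tr x)` if `n ≠ 0`. Scalar matrices are central, so `⁅xⁿ, yᵐ⁆` is a scalar multiple of the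
Lie bracket `⁅x, y⁆`. The determinant of a Lie bracket gives the trace of the group commutator:
polarizing `det` on `2 × 2` matrices yields `tr (a b a⁻¹ b⁻¹) = 2 - det ⁅a, b⁆`. Finally,
`-det ⁅x, y⁆` is the Fricke polynomial `s² + t² + u² - s t u - 4`.
-/

open Matrix

abbrev SL2C := Matrix.SpecialLinearGroup (Fin 2) ℂ

noncomputable def tr2 (x : SL2C) : ℂ := Matrix.trace (x : Matrix (Fin 2) (Fin 2) ℂ)

/-- `φ_k`, the Dickson polynomial of the second kind `E_{k-1}(X,1)`:
`φ_1 = 1`, `φ_2 = X`, `φ_{k+1} = X·φ_k − φ_{k−1}`. -/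
noncomputable def phi (k : ℕ) : Polynomial ℂ := Polynomial.dickson 2 (1 : ℂ) (k - 1)

section CommRing

open Polynomial
open scoped MatrixGroups

variable {R : Type*} [CommRing R]

local notation:1024 "↑ₘ" A:1024 => ((A : SL(2, R)) : Matrix (Fin 2) (Fin 2) R)

lemma adjugate_fin_two_eq_trace_smul_one_sub (A : Matrix (Fin 2) (Fin 2) R) :
    adjugate A = A.trace • 1 - A := by
  ext i j
  fin_cases i <;> fin_cases j <;> simp [adjugate_fin_two, trace_fin_two]

lemma mul_self_fin_two_eq_trace_smul_sub_det_smul_one (A : Matrix (Fin 2) (Fin 2) R) :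
    A * A = A.trace • A - A.det • 1 := by
  have h := mul_adjugate A
  rw [adjugate_fin_two_eq_trace_smul_one_sub, mul_sub, mul_smul_comm, mul_one] at h
  rw [← h, sub_sub_cancel]

lemma det_sub_fin_two (A B : Matrix (Fin 2) (Fin 2) R) :
    (A - B).det = A.det + B.det - (A * adjugate B).trace := by
  simp only [adjugate_fin_two, det_fin_two, trace_fin_two, mul_apply, Fin.sum_univ_two,
    Matrix.sub_apply, of_apply, cons_val', cons_val_zero, cons_val_one, cons_val_fin_one]
  ring

lemma det_lie_fin_two (A B : Matrix (Fin 2) (Fin 2) R) :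
    ⁅A, B⁆.det = 4 * A.det * B.det + A.trace * B.trace * (A * B).trace
      - A.trace ^ 2 * B.det - B.trace ^ 2 * A.det - (A * B).trace ^ 2 := by
  simp only [Ring.lie_def, det_fin_two, trace_fin_two, mul_apply, Fin.sum_univ_two,
    Matrix.sub_apply]
  ring

lemma lie_smul_sub_smul_one {A : Type*} [Ring A] [Algebra R A] (p q r s : R) (a b : A) :
    ⁅p • a - q • (1 : A), r • b - s • (1 : A)⁆ = (p * r) • ⁅a, b⁆ := by
  simp only [Ring.lie_def, sub_mul, mul_sub, smul_mul_smul_comm, one_mul, mul_one]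
  module

lemma trace_commutator_eq_two_sub_det_lie (a b : SL(2, R)) :
    trace ↑ₘ(a * b * a⁻¹ * b⁻¹) = 2 - ⁅↑ₘa, ↑ₘb⁆.det := by
  have hcomm : ↑ₘ(a * b * a⁻¹ * b⁻¹) = ↑ₘa * ↑ₘb * adjugate (↑ₘb * ↑ₘa) := by
    simp only [Matrix.SpecialLinearGroup.coe_mul, Matrix.SpecialLinearGroup.coe_inv,
      adjugate_mul_distrib, Matrix.mul_assoc]
  rw [hcomm, Ring.lie_def, det_sub_fin_two]
  simp only [det_mul, Matrix.SpecialLinearGroup.det_coe]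
  ring

lemma coe_zpow_eq_chebyshev_S (x : SL(2, R)) (n : ℤ) :
    ↑ₘ(x ^ n) = (Chebyshev.S R (n - 1)).eval (trace ↑ₘx) • ↑ₘx
      - (Chebyshev.S R (n - 2)).eval (trace ↑ₘx) • 1 := by
  have hsq : ↑ₘx * ↑ₘx = trace ↑ₘx • ↑ₘx - 1 := by
    rw [mul_self_fin_two_eq_trace_smul_sub_det_smul_one, x.det_coe, one_smul]
  have hinv : ↑ₘ(x⁻¹) = trace ↑ₘx • 1 - ↑ₘx := by
    rw [Matrix.SpecialLinearGroup.coe_inv, adjugate_fin_two_eq_trace_smul_one_sub]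
  have hrec (k : ℤ) : (Chebyshev.S R k).eval (trace ↑ₘx) =
      trace ↑ₘx * (Chebyshev.S R (k - 1)).eval (trace ↑ₘx)
        - (Chebyshev.S R (k - 2)).eval (trace ↑ₘx) := by
    rw [Chebyshev.S_eq R k, eval_sub, eval_mul, eval_X]
  induction n with
  | zero => simp
  | succ n ih =>
    rw [_root_.zpow_add_one, Matrix.SpecialLinearGroup.coe_mul, ih, add_sub_cancel_right,
      show (n : ℤ) + 1 - 2 = n - 1 by ring, hrec n, sub_mul, smul_mul_assoc, hsq, smul_one_mul]
    module
  | pred n ih =>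
    rw [_root_.zpow_sub_one, Matrix.SpecialLinearGroup.coe_mul, ih, hrec (-n - 1),
      show -(n : ℤ) - 2 = -n - 1 - 1 by ring, hinv, sub_mul, smul_mul_assoc, mul_sub,
      mul_smul_comm, mul_one, hsq, smul_one_mul]
    module

theorem trace_commutator_powers_general (n m : ℤ) (x y : SL(2, R)) :
    trace ↑ₘ(x ^ n * y ^ m * x ^ (-n) * y ^ (-m)) =
      2 + (Chebyshev.S R (n - 1)).eval (trace ↑ₘx) ^ 2 *
          (Chebyshev.S R (m - 1)).eval (trace ↑ₘy) ^ 2 *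
          (trace ↑ₘx ^ 2 + trace ↑ₘy ^ 2 + trace ↑ₘ(x * y) ^ 2
            - trace ↑ₘx * trace ↑ₘy * trace ↑ₘ(x * y) - 4) := by
  rw [_root_.zpow_neg, _root_.zpow_neg, trace_commutator_eq_two_sub_det_lie,
    coe_zpow_eq_chebyshev_S x, coe_zpow_eq_chebyshev_S y, lie_smul_sub_smul_one, det_smul,
    Fintype.card_fin, det_lie_fin_two, x.det_coe, y.det_coe, Matrix.SpecialLinearGroup.coe_mul]
  ring

end CommRing

lemma phi_natAbs_sq {n : ℤ} (hn : n ≠ 0) :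
    phi n.natAbs ^ 2 = Polynomial.Chebyshev.S ℂ (n - 1) ^ 2 := by
  have hphi : phi n.natAbs = Polynomial.Chebyshev.S ℂ (n.natAbs - 1) := by
    rw [phi, Polynomial.dickson_two_one_eq_chebyshev_S, Nat.cast_pred (Int.natAbs_pos.mpr hn)]
  rw [hphi]
  rcases Int.natAbs_eq n with h | h
  · rw [← h]
  · rw [h, Int.natAbs_neg, Int.natAbs_natCast, Polynomial.Chebyshev.S_neg_sub_one, neg_sq]

/-- the trace of the commutator of powers,
`tr ([xⁿ,yᵐ]) = 2 + φ_{|n|}(s)²·φ_{|m|}(t)²·(s² + t² + u² − s·t·u − 4)`. -/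
theorem trace_commutator_powers (n m : ℤ) (hn : n ≠ 0) (hm : m ≠ 0) (x y : SL2C) :
    tr2 (x ^ n * y ^ m * x ^ (-n) * y ^ (-m)) =
      2 + (Polynomial.eval (tr2 x) (phi n.natAbs)) ^ 2 *
          (Polynomial.eval (tr2 y) (phi m.natAbs)) ^ 2 *
          (tr2 x ^ 2 + tr2 y ^ 2 + tr2 (x * y) ^ 2
            - tr2 x * tr2 y * tr2 (x * y) - 4) := by
  simpa only [tr2, ← Polynomial.eval_pow, phi_natAbs_sq hn, phi_natAbs_sq hm] using
    trace_commutator_powers_general n m x y
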